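/- arXiv:1804.07951 — 2 statements merged into one kernel-verified Lean document; each statement's English description precedes it below -/
import Mathlib

section
/- Let m, c, k, h, ω be positive reals with ω² > (2k·m − k·h·(2c + k·h))/m², set s = iω, and let z₁, z₂ : ℝ → ℂ. Assume: z₁ and z₂ are twice differentiable with continuous first and second derivatives on [0,∞); z₁, z₁', z₂, z₂', z₂'' are all of exponential order a for some real a with a < 0; z₁(0) = 0, z₂(0) = 0 and z₂'(0) = 0; the differential equation z₂''(t) + ((c + k·h)/m)·z₂'(t) + (k/m)·z₂(t) = (c/m)·z₁'(t) + (k/m)·z₁(t) holds for all t ≥ 0; and L[z₁](s) ≠ 0. Then ‖L[z₂](s) / L[z₁](s)‖ < 1, i.e., the platoon with autonomous unidirectional variable-spacing controller is stable at frequency ω. -/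
open MeasureTheory

/-- The Laplace transform of `f : ℝ → ℂ` at `s : ℂ`:  `∫ t in (0,∞), e^{-s t} f t`. -/
noncomputable def laplace (f : ℝ → ℂ) (s : ℂ) : ℂ :=
  ∫ t in Set.Ioi (0 : ℝ), Complex.exp (-(s * t)) * f t

/-- `f` is of exponential order `a`: there is `M > 0` with `‖f t‖ ≤ M e^{a t}` for `t ≥ 0`. -/
def ExpOrder (f : ℝ → ℂ) (a : ℝ) : Prop :=
  ∃ M > 0, ∀ t ≥ (0 : ℝ), ‖f t‖ ≤ M * Real.exp (a * t)

lemma norm_kernel (ω t : ℝ) : ‖Complex.exp (-(Complex.I * (ω : ℂ) * t))‖ = 1 := by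
  rw [Complex.norm_exp]
  simp

lemma lap_int (f : ℝ → ℂ) (a ω : ℝ) (ha : a < 0) (hf : ContinuousOn f (Set.Ici 0))
    (he : ExpOrder f a) :
    IntegrableOn (fun t : ℝ => Complex.exp (-(Complex.I * (ω : ℂ) * t)) * f t) (Set.Ioi 0) := by
  obtain ⟨M, hM, hb⟩ := he
  have h1 : IntegrableOn (fun t : ℝ => M * Real.exp (a * t)) (Set.Ioi 0) :=
    (integrableOn_exp_mul_Ioi ha 0).const_mul M
  refine Integrable.mono' h1 ?_ ?_
  · apply ContinuousOn.aestronglyMeasurable _ measurableSet_Ioi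
    apply ContinuousOn.mul
    · fun_prop
    · exact hf.mono Set.Ioi_subset_Ici_self
  · filter_upwards [ae_restrict_mem measurableSet_Ioi] with t ht
    rw [norm_mul, norm_kernel, one_mul]
    exact hb t (le_of_lt ht)

lemma lap_tendsto (f : ℝ → ℂ) (a ω : ℝ) (ha : a < 0) (he : ExpOrder f a) :
    Filter.Tendsto (fun t : ℝ => Complex.exp (-(Complex.I * (ω : ℂ) * t)) * f t)
      Filter.atTop (nhds 0) := by
  obtain ⟨M, hM, hb⟩ := he
  have h1 : Filter.Tendsto (fun t : ℝ => M * Real.exp (a * t)) Filter.atTop (nhds 0) := by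
    have := (Real.tendsto_exp_atBot.comp
      (Filter.tendsto_id.const_mul_atTop_of_neg ha)).const_mul M
    simpa using this
  refine squeeze_zero_norm' ?_ h1
  filter_upwards [Filter.eventually_ge_atTop 0] with t ht
  rw [norm_mul, norm_kernel, one_mul]
  exact hb t ht

lemma lap_deriv (f f' : ℝ → ℂ) (a ω : ℝ) (ha : a < 0)
    (hd : ∀ t ∈ Set.Ici (0 : ℝ), HasDerivWithinAt f (f' t) (Set.Ici 0) t)
    (hc : ContinuousOn f' (Set.Ici 0)) (he : ExpOrder f a) (he' : ExpOrder f' a)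
    (h0 : f 0 = 0) :
    laplace f' (Complex.I * (ω : ℂ)) = Complex.I * ω * laplace f (Complex.I * (ω : ℂ)) := by
  have hcf : ContinuousOn f (Set.Ici 0) := fun t ht => (hd t ht).continuousWithinAt
  have i1 := lap_int f a ω ha hcf he
  have i2 := lap_int f' a ω ha hc he'
  have key := integral_Ioi_of_hasDerivAt_of_tendsto (a := 0) (m := 0)
    (f := fun t : ℝ => Complex.exp (-(Complex.I * (ω : ℂ) * t)) * f t)
    (f' := fun t : ℝ => Complex.exp (-(Complex.I * (ω : ℂ) * t)) * f' t
      - Complex.I * ω * (Complex.exp (-(Complex.I * (ω : ℂ) * t)) * f t))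
    ?_ ?_ (i2.sub (i1.const_mul _)) (lap_tendsto f a ω ha he)
  · rw [integral_sub i2 (i1.const_mul _), integral_const_mul] at key
    simp only [h0, mul_zero, sub_zero] at key
    exact sub_eq_zero.mp key
  · apply ContinuousWithinAt.mul
    · fun_prop
    · exact hcf 0 Set.self_mem_Ici
  · intro t ht
    have h1 : HasDerivAt f (f' t) t := (hd t (Set.Ioi_subset_Ici_self ht)).hasDerivAt (Ici_mem_nhds ht)
    have h2 : HasDerivAt (fun t : ℝ => -(Complex.I * (ω : ℂ) * t)) (-(Complex.I * (ω : ℂ) * 1)) t :=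
      ((Complex.ofRealCLM.hasDerivAt (x := t)).const_mul (Complex.I * (ω : ℂ))).neg
    refine (h2.cexp.mul h1).congr_deriv ?_
    ring

theorem stmt6 (m c k h ω : ℝ) (hm : 0 < m) (hc : 0 < c) (hk : 0 < k) (hh : 0 < h) (hω : 0 < ω)
    (hfreq : (2 * k * m - k * h * (2 * c + k * h)) / m ^ 2 < ω ^ 2)
    (s : ℂ) (hs : s = Complex.I * (ω : ℂ)) (a : ℝ) (ha : a < 0)
    (z₁ z₂ z₁' z₁'' z₂' z₂'' : ℝ → ℂ)
    (hdz₁ : ∀ t ∈ Set.Ici (0 : ℝ), HasDerivWithinAt z₁ (z₁' t) (Set.Ici 0) t)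
    (hdz₁' : ∀ t ∈ Set.Ici (0 : ℝ), HasDerivWithinAt z₁' (z₁'' t) (Set.Ici 0) t)
    (hdz₂ : ∀ t ∈ Set.Ici (0 : ℝ), HasDerivWithinAt z₂ (z₂' t) (Set.Ici 0) t)
    (hdz₂' : ∀ t ∈ Set.Ici (0 : ℝ), HasDerivWithinAt z₂' (z₂'' t) (Set.Ici 0) t)
    (hcz₁' : ContinuousOn z₁' (Set.Ici 0)) (hcz₁'' : ContinuousOn z₁'' (Set.Ici 0))
    (hcz₂' : ContinuousOn z₂' (Set.Ici 0)) (hcz₂'' : ContinuousOn z₂'' (Set.Ici 0))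
    (hez₁ : ExpOrder z₁ a) (hez₁' : ExpOrder z₁' a)
    (hez₂ : ExpOrder z₂ a) (hez₂' : ExpOrder z₂' a) (hez₂'' : ExpOrder z₂'' a)
    (hinit₁ : z₁ 0 = 0) (hinit₂ : z₂ 0 = 0) (hinit₂' : z₂' 0 = 0)
    (hode : ∀ t ≥ (0 : ℝ),
      z₂'' t + (((c + k * h) / m : ℝ) : ℂ) * z₂' t + ((k / m : ℝ) : ℂ) * z₂ t
        = ((c / m : ℝ) : ℂ) * z₁' t + ((k / m : ℝ) : ℂ) * z₁ t)
    (hL : laplace z₁ s ≠ 0) :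
    ‖laplace z₂ s / laplace z₁ s‖ < 1 := by
  subst hs
  have hcz₁ : ContinuousOn z₁ (Set.Ici 0) := fun t ht => (hdz₁ t ht).continuousWithinAt
  have hcz₂ : ContinuousOn z₂ (Set.Ici 0) := fun t ht => (hdz₂ t ht).continuousWithinAt
  have e1 := lap_deriv z₁ z₁' a ω ha hdz₁ hcz₁' hez₁ hez₁' hinit₁
  have e2 := lap_deriv z₂ z₂' a ω ha hdz₂ hcz₂' hez₂ hez₂' hinit₂
  have e3 := lap_deriv z₂' z₂'' a ω ha hdz₂' hcz₂'' hez₂' hez₂'' hinit₂'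
  have i1 := lap_int z₁ a ω ha hcz₁ hez₁
  have i1' := lap_int z₁' a ω ha hcz₁' hez₁'
  have i2 := lap_int z₂ a ω ha hcz₂ hez₂
  have i2' := lap_int z₂' a ω ha hcz₂' hez₂'
  have i2'' := lap_int z₂'' a ω ha hcz₂'' hez₂''
  have hfr : 0 < ω ^ 2 - 2 * (k / m) + ((c + k * h) / m) ^ 2 - (c / m) ^ 2 := by
    have : (2 * k * m - k * h * (2 * c + k * h)) / m ^ 2
        = 2 * (k / m) - ((c + k * h) / m) ^ 2 + (c / m) ^ 2 := by
      field_simp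
      ring
    linarith
  generalize (c + k * h) / m = p at *
  generalize k / m = q at *
  generalize c / m = b at *
  have E : laplace z₂'' (Complex.I * ω) + p * laplace z₂' (Complex.I * ω)
      + q * laplace z₂ (Complex.I * ω)
      = b * laplace z₁' (Complex.I * ω) + q * laplace z₁ (Complex.I * ω) := by
    unfold laplace
    rw [← integral_const_mul, ← integral_const_mul, ← integral_const_mul, ← integral_const_mul,
      ← integral_add i2'' (i2'.const_mul _), ← integral_add (i1'.const_mul _) (i1.const_mul _)]
    refine (integral_add (i2''.add (i2'.const_mul _)) (i2.const_mul _)).symm.trans ?_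
    refine setIntegral_congr_fun measurableSet_Ioi fun t ht => ?_
    have := hode t (le_of_lt ht)
    simp only [Pi.add_apply]
    linear_combination Complex.exp (-(Complex.I * (ω : ℂ) * t)) * this
  rw [e3, e2, e1] at E
  generalize laplace z₁ (Complex.I * ω) = Z1 at *
  generalize laplace z₂ (Complex.I * ω) = Z2 at *
  have E2 : Z2 * (((q - ω ^ 2 : ℝ) : ℂ) + ((p * ω : ℝ) : ℂ) * Complex.I)
      = Z1 * ((q : ℂ) + ((b * ω : ℝ) : ℂ) * Complex.I) := by
    push_cast
    linear_combination E - ω ^ 2 * Z2 * Complex.I_sq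
  have hN : ‖(q : ℂ) + ((b * ω : ℝ) : ℂ) * Complex.I‖
      < ‖((q - ω ^ 2 : ℝ) : ℂ) + ((p * ω : ℝ) : ℂ) * Complex.I‖ := by
    rw [Complex.norm_add_mul_I, Complex.norm_add_mul_I]
    apply Real.sqrt_lt_sqrt (by positivity)
    have := mul_pos (pow_pos hω 2) hfr
    nlinarith
  have E3 := congrArg norm E2
  rw [norm_mul, norm_mul] at E3
  have hZ : 0 < ‖Z1‖ := norm_pos_iff.mpr hL
  rw [norm_div, div_lt_one hZ]
  by_contra hcon
  push Not at hcon
  have h1 := mul_lt_mul_of_pos_left hN hZ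
  have h2 := mul_le_mul_of_nonneg_right hcon
    (norm_nonneg (((q - ω ^ 2 : ℝ) : ℂ) + ((p * ω : ℝ) : ℂ) * Complex.I))
  linarith
end

section
/- Let m, c, k, ω be positive reals with 0 < m²·ω⁴ + (3c² − 4k·m)·ω² + 3k², set s = iω, and let z₁, z₂ : ℝ → ℂ. Assume: z₁ and z₂ are twice differentiable with continuous first and second derivatives on [0,∞); z₁, z₁', z₂, z₂', z₂'' are all of exponential order a for some real a with a < 0; z₁(0) = 0, z₂(0) = 0 and z₂'(0) = 0; the differential equation z₂''(t) + (2c/m)·z₂'(t) + (2k/m)·z₂(t) = (c/m)·z₁'(t) + (k/m)·z₁(t) holds for all t ≥ 0; and L[z₁](s) ≠ 0. Then ‖L[z₂](s) / L[z₁](s)‖ < 1, i.e., the platoon with autonomous bidirectional constant-spacing controller is stable at frequency ω. -/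
open MeasureTheory

theorem aux_norm (ω t : ℝ) : ‖Complex.exp (-(Complex.I * (ω : ℂ) * (t : ℂ)))‖ = 1 := by
  rw [Complex.norm_exp]
  simp

theorem aux_int (f : ℝ → ℂ) (ω a : ℝ) (ha : a < 0) (hf : ContinuousOn f (Set.Ici 0))
    (he : ExpOrder f a) :
    IntegrableOn (fun t : ℝ => Complex.exp (-(Complex.I * (ω : ℂ) * (t : ℂ))) * f t)
      (Set.Ioi 0) := by
  obtain ⟨M, hM, hb⟩ := he
  refine Integrable.mono' ((integrableOn_exp_mul_Ioi ha 0).const_mul M) ?_ ?_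
  · refine ContinuousOn.aestronglyMeasurable ?_ measurableSet_Ioi
    refine ContinuousOn.mul ?_ (hf.mono Set.Ioi_subset_Ici_self)
    exact Continuous.continuousOn (by fun_prop)
  · refine (ae_restrict_iff' measurableSet_Ioi).2 (Filter.Eventually.of_forall ?_)
    intro t ht
    rw [norm_mul, aux_norm, one_mul]
    exact hb t (le_of_lt ht)

theorem aux_deriv (f f' : ℝ → ℂ) (ω a : ℝ) (ha : a < 0)
    (hd : ∀ t ∈ Set.Ici (0 : ℝ), HasDerivWithinAt f (f' t) (Set.Ici 0) t)
    (hf' : ContinuousOn f' (Set.Ici 0))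
    (he : ExpOrder f a) (he' : ExpOrder f' a) (h0 : f 0 = 0) :
    laplace f' (Complex.I * (ω : ℂ)) = Complex.I * (ω : ℂ) * laplace f (Complex.I * (ω : ℂ)) := by
  have hc : ContinuousOn f (Set.Ici 0) := fun t ht => (hd t ht).continuousWithinAt
  have i1 := aux_int f ω a ha hc he
  have i2 := aux_int f' ω a ha hf' he'
  have hE : ∀ t : ℝ, HasDerivAt (fun t : ℝ => Complex.exp (-(Complex.I * (ω : ℂ) * (t : ℂ))))
      (Complex.exp (-(Complex.I * (ω : ℂ) * (t : ℂ))) * (-(Complex.I * (ω : ℂ) * 1))) t := by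
    intro t
    exact (((Complex.ofRealCLM.hasDerivAt (x := t)).const_mul (Complex.I * (ω : ℂ))).neg).cexp
  have key := integral_Ioi_of_hasDerivAt_of_tendsto (a := 0) (m := 0)
    (f := fun t : ℝ => Complex.exp (-(Complex.I * (ω : ℂ) * (t : ℂ))) * f t)
    (f' := fun t : ℝ => Complex.exp (-(Complex.I * (ω : ℂ) * (t : ℂ))) * f' t
      - Complex.I * (ω : ℂ) * (Complex.exp (-(Complex.I * (ω : ℂ) * (t : ℂ))) * f t)) ?_ ?_ ?_ ?_
  · rw [integral_sub i2 (i1.const_mul _), integral_const_mul] at key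
    simp only [h0, mul_zero, sub_zero] at key
    exact sub_eq_zero.1 key
  · exact (hE 0).continuousAt.continuousWithinAt.mul (hc 0 Set.self_mem_Ici)
  · intro t ht
    have h1 := (hd t (Set.mem_Ici.2 (le_of_lt (Set.mem_Ioi.1 ht)))).hasDerivAt (Ici_mem_nhds ht)
    convert! (hE t).mul h1 using 1
    ring
  · exact i2.sub (i1.const_mul _)
  · obtain ⟨M, hM, hb⟩ := he
    have hlim : Filter.Tendsto (fun t : ℝ => M * Real.exp (a * t)) Filter.atTop (nhds 0) := by
      have : Filter.Tendsto (fun t : ℝ => a * t) Filter.atTop Filter.atBot :=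
        Filter.tendsto_id.const_mul_atTop_of_neg ha
      simpa using (Real.tendsto_exp_atBot.comp this).const_mul M
    refine squeeze_zero_norm' ?_ hlim
    filter_upwards [Filter.eventually_ge_atTop 0] with t ht
    rw [norm_mul, aux_norm, one_mul]
    exact hb t ht

theorem stmt11 (m c k ω : ℝ) (hm : 0 < m) (hc : 0 < c) (hk : 0 < k) (hω : 0 < ω)
    (hfreq : 0 < m ^ 2 * ω ^ 4 + (3 * c ^ 2 - 4 * k * m) * ω ^ 2 + 3 * k ^ 2)
    (s : ℂ) (hs : s = Complex.I * (ω : ℂ)) (a : ℝ) (ha : a < 0)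
    (z₁ z₂ z₁' z₁'' z₂' z₂'' : ℝ → ℂ)
    (hdz₁ : ∀ t ∈ Set.Ici (0 : ℝ), HasDerivWithinAt z₁ (z₁' t) (Set.Ici 0) t)
    (hdz₁' : ∀ t ∈ Set.Ici (0 : ℝ), HasDerivWithinAt z₁' (z₁'' t) (Set.Ici 0) t)
    (hdz₂ : ∀ t ∈ Set.Ici (0 : ℝ), HasDerivWithinAt z₂ (z₂' t) (Set.Ici 0) t)
    (hdz₂' : ∀ t ∈ Set.Ici (0 : ℝ), HasDerivWithinAt z₂' (z₂'' t) (Set.Ici 0) t)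
    (hcz₁' : ContinuousOn z₁' (Set.Ici 0)) (hcz₁'' : ContinuousOn z₁'' (Set.Ici 0))
    (hcz₂' : ContinuousOn z₂' (Set.Ici 0)) (hcz₂'' : ContinuousOn z₂'' (Set.Ici 0))
    (hez₁ : ExpOrder z₁ a) (hez₁' : ExpOrder z₁' a)
    (hez₂ : ExpOrder z₂ a) (hez₂' : ExpOrder z₂' a) (hez₂'' : ExpOrder z₂'' a)
    (hinit₁ : z₁ 0 = 0) (hinit₂ : z₂ 0 = 0) (hinit₂' : z₂' 0 = 0)
    (hode : ∀ t ≥ (0 : ℝ),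
      z₂'' t + ((2 * c / m : ℝ) : ℂ) * z₂' t + ((2 * k / m : ℝ) : ℂ) * z₂ t
        = ((c / m : ℝ) : ℂ) * z₁' t + ((k / m : ℝ) : ℂ) * z₁ t)
    (hL : laplace z₁ s ≠ 0) :
    ‖laplace z₂ s / laplace z₁ s‖ < 1 := by
  subst hs
  have c1 : ContinuousOn z₁ (Set.Ici 0) := fun t ht => (hdz₁ t ht).continuousWithinAt
  have c2 : ContinuousOn z₂ (Set.Ici 0) := fun t ht => (hdz₂ t ht).continuousWithinAt
  have d1 := aux_deriv z₁ z₁' ω a ha hdz₁ hcz₁' hez₁ hez₁' hinit₁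
  have d2 := aux_deriv z₂ z₂' ω a ha hdz₂ hcz₂' hez₂ hez₂' hinit₂
  have d3 := aux_deriv z₂' z₂'' ω a ha hdz₂' hcz₂'' hez₂' hez₂'' hinit₂'
  have i1 := aux_int z₁ ω a ha c1 hez₁
  have i1' := aux_int z₁' ω a ha hcz₁' hez₁'
  have i2 := aux_int z₂ ω a ha c2 hez₂
  have i2' := aux_int z₂' ω a ha hcz₂' hez₂'
  have i2'' := aux_int z₂'' ω a ha hcz₂'' hez₂''
  have key : laplace z₂'' (Complex.I * (ω : ℂ))
      + ((2 * c / m : ℝ) : ℂ) * laplace z₂' (Complex.I * (ω : ℂ))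
      + ((2 * k / m : ℝ) : ℂ) * laplace z₂ (Complex.I * (ω : ℂ))
      = ((c / m : ℝ) : ℂ) * laplace z₁' (Complex.I * (ω : ℂ))
      + ((k / m : ℝ) : ℂ) * laplace z₁ (Complex.I * (ω : ℂ)) := by
    unfold laplace
    simp only [← integral_const_mul]
    have j : IntegrableOn (fun t : ℝ => Complex.exp (-(Complex.I * (ω : ℂ) * (t : ℂ))) * z₂'' t
        + ((2 * c / m : ℝ) : ℂ) * (Complex.exp (-(Complex.I * (ω : ℂ) * (t : ℂ))) * z₂' t))
        (Set.Ioi 0) := i2''.add (i2'.const_mul _)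
    rw [← integral_add i2'' (i2'.const_mul _),
      ← integral_add j (i2.const_mul _),
      ← integral_add (i1'.const_mul _) (i1.const_mul _)]
    refine setIntegral_congr_fun measurableSet_Ioi ?_
    intro t ht
    have := hode t (le_of_lt ht)
    simp only
    linear_combination Complex.exp (-(Complex.I * (ω : ℂ) * (t : ℂ))) * this
  rw [d3, d2, d1] at key
  generalize laplace z₁ (Complex.I * (ω : ℂ)) = A at *
  generalize laplace z₂ (Complex.I * (ω : ℂ)) = B at *
  have hmC : (m : ℂ) ≠ 0 := by exact_mod_cast hm.ne'
  have key2 : (⟨2 * k - m * ω ^ 2, 2 * c * ω⟩ : ℂ) * B = (⟨k, c * ω⟩ : ℂ) * A := by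
    rw [Complex.mk_eq_add_mul_I, Complex.mk_eq_add_mul_I]
    push_cast at key ⊢
    field_simp at key
    linear_combination key - (m : ℂ) * ω ^ 2 * B * Complex.I_sq
  have hn := congrArg Complex.normSq key2
  rw [Complex.normSq_mul, Complex.normSq_mul, Complex.normSq_mk (2 * k - m * ω ^ 2) (2 * c * ω),
    Complex.normSq_mk k (c * ω)] at hn
  have hA : 0 < Complex.normSq A := Complex.normSq_pos.2 hL
  have hB : Complex.normSq B < Complex.normSq A := by
    by_contra! h
    have hp : 0 < k * k + c * ω * (c * ω) := by positivity
    nlinarith [mul_le_mul_of_nonneg_left h hp.le, mul_pos hfreq (hA.trans_le h)]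
  rw [norm_div, div_lt_one (norm_pos_iff.2 hL)]
  rw [Complex.normSq_eq_norm_sq, Complex.normSq_eq_norm_sq] at hB
  exact lt_of_pow_lt_pow_left₀ 2 (norm_nonneg _) hB
end
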